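/- Let T be a tree having l leaves, β branches with at least one end-path, and b ≥ 1 branches with at least two end-paths, and let P_1, …, P_b be the end-palms of T. Then χ_L(T) ≤ 2 − 2b + Σ_{i=1}^{b} χ_L(P_i) ≤ l − β + 2 ≤ l − b + 2. -/

import Mathlib

open SimpleGraph

/-- Distance from a vertex to a set of vertices, `d(u,S) = min {d(u,v) : v ∈ S}`. -/
noncomputable def distToSet {V : Type*} (G : SimpleGraph V) (u : V) (S : Set V) : ℕ :=
  sInf (G.dist u '' S)

/-- `c` is a locating coloring of `G` with `k` colors: a proper coloring such that any two
distinct vertices are resolved by some color class. -/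
def IsLocatingColoring {V : Type*} (G : SimpleGraph V) {k : ℕ} (c : V → Fin k) : Prop :=
  (∀ u v : V, G.Adj u v → c u ≠ c v) ∧
  ∀ u v : V, u ≠ v →
    ∃ i : Fin k, distToSet G u (c ⁻¹' {i}) ≠ distToSet G v (c ⁻¹' {i})

/-- The locating chromatic number `χ_L(G)`: the least `k` admitting a locating `k`-coloring. -/
noncomputable def locatingChromaticNumber {V : Type*} (G : SimpleGraph V) : ℕ :=
  sInf {k : ℕ | ∃ c : V → Fin k, IsLocatingColoring G c}

/-- A walk `p` from `u` to `v` is an *end-path* if it is a path joining a leaf `u` to its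
nearest branch `v`: `u` has degree 1, `v` has degree at least 3, and every internal
vertex of the path has degree 2. -/
def IsEndPath {V : Type*} [Fintype V] (T : SimpleGraph V) [DecidableRel T.Adj]
    {u v : V} (p : T.Walk u v) : Prop :=
  p.IsPath ∧ T.degree u = 1 ∧ 3 ≤ T.degree v ∧
    ∀ w ∈ p.support, w ≠ u → w ≠ v → T.degree w = 2

/-- A vertex is an *end-branch* if it is a branch at which at least two end-paths end. -/
def IsEndBranch {V : Type*} [Fintype V] (T : SimpleGraph V) [DecidableRel T.Adj]
    (v : V) : Prop :=
  ∃ (u₁ u₂ : V) (p₁ : T.Walk u₁ v) (p₂ : T.Walk u₂ v),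
    u₁ ≠ u₂ ∧ IsEndPath T p₁ ∧ IsEndPath T p₂

/-- The *end-palm* of an end-branch `v`: the vertex `v` together with all vertices of
the end-paths ending at `v`. -/
def endPalm {V : Type*} [Fintype V] (T : SimpleGraph V) [DecidableRel T.Adj]
    (v : V) : Set V :=
  {v} ∪ {w | ∃ (u : V) (p : T.Walk u v), IsEndPath T p ∧ w ∈ p.support}

/-- `a` and `b` are joined by a walk that avoids `m`. -/
def JoinedAvoiding {V : Type*} (G : SimpleGraph V) (m a b : V) : Prop :=
  ∃ p : G.Walk a b, m ∉ p.support

namespace JoinedAvoiding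

variable {V : Type*} {G : SimpleGraph V} {m a b c : V}

theorem symm (h : JoinedAvoiding G m a b) : JoinedAvoiding G m b a := by
  obtain ⟨p, hp⟩ := h
  exact ⟨p.reverse, by simpa using hp⟩

theorem trans (h₁ : JoinedAvoiding G m a b) (h₂ : JoinedAvoiding G m b c) :
    JoinedAvoiding G m a c := by
  obtain ⟨p, hp⟩ := h₁
  obtain ⟨q, hq⟩ := h₂
  exact ⟨p.append q, by simp [Walk.mem_support_append_iff, hp, hq]⟩

theorem refl (h : a ≠ m) : JoinedAvoiding G m a a :=
  ⟨Walk.nil, by simpa using h.symm⟩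

theorem ne_left (h : JoinedAvoiding G m a b) : a ≠ m := by
  rintro rfl
  obtain ⟨p, hp⟩ := h
  exact hp p.start_mem_support

theorem ne_right (h : JoinedAvoiding G m a b) : b ≠ m := h.symm.ne_left

theorem of_adj (h : G.Adj a b) (ha : a ≠ m) (hb : b ≠ m) : JoinedAvoiding G m a b :=
  ⟨h.toWalk, by simp [ha.symm, hb.symm]⟩

end JoinedAvoiding

/-- The component of `w` in `G - m` contains no branch. -/
def IsOnLeg {V : Type*} [Fintype V] (G : SimpleGraph V) [DecidableRel G.Adj] (m w : V) : Prop :=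
  w ≠ m ∧ ∀ z, JoinedAvoiding G m w z → G.degree z ≤ 2

theorem IsOnLeg.of_joinedAvoiding {V : Type*} [Fintype V] {G : SimpleGraph V} [DecidableRel G.Adj]
    {m w z : V} (h : IsOnLeg G m w) (hz : JoinedAvoiding G m w z) : IsOnLeg G m z :=
  ⟨hz.ne_right, fun _ hy => h.2 _ (hz.trans hy)⟩

theorem SimpleGraph.exists_adj_ne_ne_of_three_le_degree {V : Type*} [Fintype V]
    {G : SimpleGraph V} [DecidableRel G.Adj] {z : V} (h : 3 ≤ G.degree z) (a : V) :
    ∃ x y, x ≠ y ∧ x ≠ a ∧ y ≠ a ∧ G.Adj z x ∧ G.Adj z y := by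
  classical
  have h1 : 1 < ((G.neighborFinset z).erase a).card := by
    have := Finset.pred_card_le_card_erase (s := G.neighborFinset z) (a := a)
    rw [G.card_neighborFinset_eq_degree] at this
    omega
  obtain ⟨x, hx, y, hy, hxy⟩ := Finset.one_lt_card.1 h1
  simp only [Finset.mem_erase, mem_neighborFinset] at hx hy
  exact ⟨x, y, hxy, hx.1, hy.1, hx.2, hy.2⟩

theorem SimpleGraph.three_le_degree_of_adj {V : Type*} [Fintype V]
    {G : SimpleGraph V} [DecidableRel G.Adj] {z a b c : V} (ha : G.Adj z a) (hb : G.Adj z b)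
    (hc : G.Adj z c) (hab : a ≠ b) (hac : a ≠ c) (hbc : b ≠ c) : 3 ≤ G.degree z := by
  classical
  have h : ({a, b, c} : Finset V) ⊆ G.neighborFinset z := by
    intro x hx
    simp only [Finset.mem_insert, Finset.mem_singleton] at hx
    rcases hx with rfl | rfl | rfl <;> simpa
  have := Finset.card_le_card h
  rwa [G.card_neighborFinset_eq_degree, Finset.card_eq_three.2 ⟨a, b, c, hab, hac, hbc, rfl⟩] at this

theorem SimpleGraph.two_le_degree_of_adj {V : Type*} [Fintype V]
    {G : SimpleGraph V} [DecidableRel G.Adj] {z a b : V} (ha : G.Adj z a) (hb : G.Adj z b)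
    (hab : a ≠ b) : 2 ≤ G.degree z := by
  classical
  have h : ({a, b} : Finset V) ⊆ G.neighborFinset z := by
    intro x hx
    simp only [Finset.mem_insert, Finset.mem_singleton] at hx
    rcases hx with rfl | rfl <;> simpa
  have := Finset.card_le_card h
  rwa [G.card_neighborFinset_eq_degree, Finset.card_pair hab] at this

theorem SimpleGraph.eq_of_adj_of_degree_eq_one {V : Type*} [Fintype V]
    {G : SimpleGraph V} [DecidableRel G.Adj] {z a b : V} (h : G.degree z = 1) (ha : G.Adj z a)
    (hb : G.Adj z b) : a = b := by
  by_contra hab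
  have := two_le_degree_of_adj ha hb hab
  omega

theorem SimpleGraph.eq_or_eq_of_adj_of_degree_le_two {V : Type*} [Fintype V]
    {G : SimpleGraph V} [DecidableRel G.Adj] {z a b c : V} (h : G.degree z ≤ 2) (ha : G.Adj z a)
    (hb : G.Adj z b) (hab : a ≠ b) (hc : G.Adj z c) : c = a ∨ c = b := by
  by_contra! hcab
  have := three_le_degree_of_adj ha hb hc hab hcab.1.symm hcab.2.symm
  omega

namespace SimpleGraph.Connected

variable {V : Type*} {G : SimpleGraph V}

theorem joinedAvoiding_of_dist_ne (hG : G.Connected) {m a b : V}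
    (h : G.dist a m + G.dist m b ≠ G.dist a b) : JoinedAvoiding G m a b := by
  classical
  obtain ⟨p, hp⟩ := hG.exists_walk_length_eq_dist a b
  refine ⟨p, fun hm => h ?_⟩
  have h1 := congrArg Walk.length (p.take_spec hm)
  rw [Walk.length_append] at h1
  have := dist_le (p.takeUntil m hm)
  have := dist_le (p.dropUntil m hm)
  have := hG.dist_triangle (u := a) (v := m) (w := b)
  omega

theorem dist_le_dist_add_one (hG : G.Connected) {u v w : V} (h : G.Adj v w) :
    G.dist u w ≤ G.dist u v + 1 := by
  have := hG.dist_triangle (u := u) (v := v) (w := w)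
  rwa [dist_eq_one_iff_adj.2 h] at this

theorem exists_adj_dist_add_one_eq (hG : G.Connected) {a m : V} (h : a ≠ m) :
    ∃ x, G.Adj m x ∧ G.dist a x + 1 = G.dist a m := by
  obtain ⟨p, hp⟩ := hG.exists_walk_length_eq_dist m a
  cases p with
  | nil => exact absurd rfl h
  | cons hadj q =>
    refine ⟨_, hadj, ?_⟩
    rw [Walk.length_cons] at hp
    have h1 := dist_le q
    have h2 := hG.dist_le_dist_add_one (u := a) hadj.symm
    rw [dist_comm] at hp h1
    omega

/-- The neighbor of `m` towards `a` lies on the same side of `m` as `a`. -/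
theorem exists_adj_joinedAvoiding (hG : G.Connected) {a m : V} (h : a ≠ m) :
    ∃ x, G.Adj m x ∧ G.dist a x + 1 = G.dist a m ∧ JoinedAvoiding G m a x := by
  obtain ⟨x, hx, hd⟩ := hG.exists_adj_dist_add_one_eq h
  exact ⟨x, hx, hd, hG.joinedAvoiding_of_dist_ne (by omega)⟩

end SimpleGraph.Connected

namespace SimpleGraph.IsTree

variable {V : Type*} {T : SimpleGraph V}

theorem length_eq_dist (hT : T.IsTree) {a b : V} {p : T.Walk a b} (hp : p.IsPath) :
    p.length = T.dist a b := by
  obtain ⟨q, hq, hql⟩ := hT.connected.exists_path_of_dist a b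
  rw [← hql, (hT.existsUnique_path a b).unique hp hq]

theorem joinedAvoiding_iff (hT : T.IsTree) {m a b : V} :
    JoinedAvoiding T m a b ↔ T.dist a m + T.dist m b ≠ T.dist a b := by
  classical
  refine ⟨fun ⟨p, hp⟩ h => ?_, hT.connected.joinedAvoiding_of_dist_ne⟩
  obtain ⟨q, hq⟩ := hT.connected.exists_walk_length_eq_dist a m
  obtain ⟨r, hr⟩ := hT.connected.exists_walk_length_eq_dist m b
  have hqr : (q.append r).IsPath :=
    Walk.isPath_of_length_eq_dist _ (by rw [Walk.length_append, hq, hr, h])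
  have := (hT.existsUnique_path a b).unique hqr p.bypass_isPath
  apply hp
  apply p.support_bypass_subset_support
  rw [← this]
  simp [Walk.mem_support_append_iff]

theorem dist_add_dist (hT : T.IsTree) {m a b : V} (h : ¬ JoinedAvoiding T m a b) :
    T.dist a m + T.dist m b = T.dist a b := by
  rwa [hT.joinedAvoiding_iff, not_not] at h

/-- Distinct neighbors of `m` lie in distinct components of `T - m`. -/
theorem eq_of_adj_of_joinedAvoiding (hT : T.IsTree) {m x y : V} (hx : T.Adj m x) (hy : T.Adj m y)
    (h : JoinedAvoiding T m x y) : x = y := by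
  by_contra hxy
  have hp : (Walk.cons hx.symm (Walk.cons hy Walk.nil)).IsPath := by
    simp [Walk.cons_isPath_iff, hxy, hx.ne', hy.ne]
  have := hT.length_eq_dist hp
  rw [hT.joinedAvoiding_iff, dist_eq_one_iff_adj.2 hx.symm, dist_eq_one_iff_adj.2 hy] at h
  simp at this
  omega

theorem not_joinedAvoiding_of_adj (hT : T.IsTree) {m x y : V} (hx : T.Adj m x) (hy : T.Adj m y)
    (h : x ≠ y) : ¬ JoinedAvoiding T m x y :=
  fun hxy => h (hT.eq_of_adj_of_joinedAvoiding hx hy hxy)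

end SimpleGraph.IsTree

namespace IsEndPath

variable {V : Type*} [Fintype V] {T : SimpleGraph V} [DecidableRel T.Adj] {u v w x y z : V}
  {p : T.Walk u v}

theorem ne (hp : IsEndPath T p) : u ≠ v := by
  rintro rfl
  have := hp.2.1
  have := hp.2.2.1
  omega

theorem mem_support_of_adj (hp : IsEndPath T p) (hx : x ∈ p.support) (hxv : x ≠ v)
    (hxy : T.Adj x y) : y ∈ p.support := by
  obtain ⟨i, rfl, hi⟩ := Walk.mem_support_iff_exists_getVert.1 hx
  have hlt : i < p.length := by
    refine lt_of_le_of_ne hi ?_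
    rintro rfl
    exact hxv p.getVert_length
  have hs := p.adj_getVert_succ hlt
  by_cases hi0 : i = 0
  · subst hi0
    rw [Walk.getVert_zero] at hs hxy
    rw [eq_of_adj_of_degree_eq_one hp.2.1 hxy hs]
    exact p.getVert_mem_support _
  · have hs' := (p.adj_getVert_succ (i := i - 1) (by omega)).symm
    rw [Nat.sub_add_cancel (by omega)] at hs'
    have hinj := hp.1.getVert_injOn
    have hne : p.getVert (i - 1) ≠ p.getVert (i + 1) := fun h => by
      have := hinj (by simp; omega) (by simp; omega) h
      omega
    have hiu : p.getVert i ≠ u := fun h => by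
      have := hinj (by simp; omega) (by simp) (h.trans p.getVert_zero.symm)
      omega
    have hdeg := hp.2.2.2 _ hx hiu hxv
    rcases eq_or_eq_of_adj_of_degree_le_two hdeg.le hs' hs hne hxy with rfl | rfl <;>
      exact p.getVert_mem_support _

theorem mem_support_of_joinedAvoiding (hp : IsEndPath T p) (hx : x ∈ p.support)
    (h : JoinedAvoiding T v x z) : z ∈ p.support := by
  obtain ⟨q, hq⟩ := h
  induction q with
  | nil => exact hx
  | cons hadj q ih =>
    simp only [Walk.support_cons, List.mem_cons, not_or] at hq
    exact ih (hp.mem_support_of_adj hx (Ne.symm hq.1) hadj) hq.2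

theorem isOnLeg (hp : IsEndPath T p) (hw : w ∈ p.support) (hwv : w ≠ v) : IsOnLeg T v w := by
  refine ⟨hwv, fun z hz => ?_⟩
  by_cases hzu : z = u
  · rw [hzu, hp.2.1]
    omega
  · exact (hp.2.2.2 z (hp.mem_support_of_joinedAvoiding hw hz) hzu hz.ne_right).le

end IsEndPath

namespace SimpleGraph.IsTree

variable {V : Type*} [Fintype V] {T : SimpleGraph V} [DecidableRel T.Adj] {u v w x y z m : V}

theorem exists_isEndPath (hT : T.IsTree) (hv : 3 ≤ T.degree v) (hw : IsOnLeg T v w) :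
    ∃ (u : V) (p : T.Walk u v), IsEndPath T p ∧ w ∈ p.support ∧ JoinedAvoiding T v w u := by
  classical
  obtain ⟨u, hu, hmax⟩ := Finset.exists_max_image
    (Finset.univ.filter fun a => T.dist a w + T.dist w v = T.dist a v) (fun a => T.dist a v)
    ⟨w, by simp⟩
  simp only [Finset.mem_filter, Finset.mem_univ, true_and] at hu hmax
  have hwv := hT.connected.pos_dist_of_ne hw.1
  have huv : u ≠ v := by
    rintro rfl
    rw [dist_self] at hu
    omega
  have hjoin : JoinedAvoiding T v w u := by
    rw [hT.joinedAvoiding_iff, T.dist_comm (u := v), T.dist_comm (u := w) (v := u)]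
    omega
  obtain ⟨q, hq, hql⟩ := hT.connected.exists_path_of_dist u w
  obtain ⟨r, hr, hrl⟩ := hT.connected.exists_path_of_dist w v
  have hlen : (q.append r).length = T.dist u v := by rw [Walk.length_append, hql, hrl, hu]
  have hpath := Walk.isPath_of_length_eq_dist _ hlen
  have hmem : w ∈ (q.append r).support := by simp [Walk.mem_support_append_iff]
  generalize q.append r = p at hlen hpath hmem
  obtain ⟨x, hx, hxd⟩ := hT.connected.exists_adj_dist_add_one_eq huv.symm
  refine ⟨u, p, ⟨hpath, ?_, hv, ?_⟩, hmem, hjoin⟩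
  · rw [← T.card_neighborFinset_eq_degree, Finset.card_eq_one]
    refine ⟨x, Finset.eq_singleton_iff_unique_mem.2 ⟨by simpa, fun y hy => ?_⟩⟩
    rw [mem_neighborFinset] at hy
    by_contra hyx
    have hyv : T.dist v y = T.dist v u + 1 := by
      have h1 := hT.dist_eq_dist_add_one_of_adj v hy
      rcases h1 with h1 | h1
      · exfalso
        refine hyx (hT.eq_of_adj_of_joinedAvoiding hy hx ?_)
        have hj1 : JoinedAvoiding T u v y := hT.joinedAvoiding_iff.2 (by omega)
        have hj2 : JoinedAvoiding T u v x := hT.joinedAvoiding_iff.2 (by omega)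
        exact hj1.symm.trans hj2
      · exact h1
    have h1 := hT.connected.dist_le_dist_add_one (u := w) hy
    have h2 := hT.connected.dist_triangle (u := y) (v := w) (w := v)
    have h3 := hmax y
    have h4 := T.dist_comm (u := y) (v := v)
    have h5 := T.dist_comm (u := u) (v := v)
    have h6 := T.dist_comm (u := y) (v := w)
    have h7 := T.dist_comm (u := u) (v := w)
    omega
  · intro z hz hzu hzv
    obtain ⟨i, rfl, hi⟩ := Walk.mem_support_iff_exists_getVert.1 hz
    obtain ⟨j, hj, hjl⟩ := Walk.mem_support_iff_exists_getVert.1 hmem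
    have hlt : i < p.length := by
      refine lt_of_le_of_ne hi ?_
      rintro rfl
      exact hzv p.getVert_length
    have hi0 : i ≠ 0 := by
      rintro rfl
      exact hzu p.getVert_zero
    apply le_antisymm
    · apply hw.2
      refine hjoin.trans ⟨p.take i, fun hvm => ?_⟩
      obtain ⟨k, hk, hkl⟩ := Walk.mem_support_iff_exists_getVert.1 hvm
      rw [Walk.take_getVert] at hk
      have := hpath.getVert_injOn (x₁ := min i k) (by simp; omega) (by simp)
        (hk.trans p.getVert_length.symm)
      omega
    · have hs := p.adj_getVert_succ hlt
      have hs' := (p.adj_getVert_succ (i := i - 1) (by omega)).symm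
      rw [Nat.sub_add_cancel (by omega)] at hs'
      refine two_le_degree_of_adj hs' hs fun h => ?_
      have := hpath.getVert_injOn (by simp; omega) (by simp; omega) h
      omega

theorem mem_endPalm_iff (hT : T.IsTree) (hv : 3 ≤ T.degree v) :
    w ∈ endPalm T v ↔ w = v ∨ IsOnLeg T v w := by
  by_cases hwv : w = v
  · simp [hwv, endPalm]
  simp only [endPalm, Set.mem_union, Set.mem_singleton_iff, hwv, false_or]
  refine ⟨fun ⟨u, p, hp, hw⟩ => hp.isOnLeg hw hwv, fun h => ?_⟩
  obtain ⟨u, p, hp, hw, -⟩ := hT.exists_isEndPath hv h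
  exact ⟨u, p, hp, hw⟩

/-- On each leg there is at most one vertex at any given depth. -/
theorem eq_of_isOnLeg_of_dist_eq (hT : T.IsTree) (hv : 3 ≤ T.degree v) (hu : IsOnLeg T v u)
    (huw : JoinedAvoiding T v u w) (h : T.dist u v = T.dist w v) : u = w := by
  classical
  obtain ⟨a, p, hp, hup, -⟩ := hT.exists_isEndPath hv hu
  have hwp := hp.mem_support_of_joinedAvoiding hup huw
  have hl (x : V) (hx : x ∈ p.support) : (p.takeUntil x hx).length + T.dist x v = p.length := by
    rw [← hT.length_eq_dist (hp.1.dropUntil hx), ← Walk.length_append, p.take_spec]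
  have h1 := hl u hup
  have h2 := hl w hwp
  rw [← p.getVert_length_takeUntil hup, ← p.getVert_length_takeUntil hwp]
  congr 1
  omega

theorem exists_leaf (hT : T.IsTree) (hv : 3 ≤ T.degree v) (hw : IsOnLeg T v w) :
    ∃ u, T.degree u = 1 ∧ IsOnLeg T v u ∧ JoinedAvoiding T v w u := by
  obtain ⟨u, p, hp, -, hj⟩ := hT.exists_isEndPath hv hw
  exact ⟨u, hp.2.1, hw.of_joinedAvoiding hj, hj⟩

theorem isEndBranch_of_isOnLeg (hT : T.IsTree) (hv : 3 ≤ T.degree v) (hx : IsOnLeg T v x)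
    (hy : IsOnLeg T v y) (hxy : ¬ JoinedAvoiding T v x y) : IsEndBranch T v := by
  obtain ⟨a, p, hp, -, ha⟩ := hT.exists_isEndPath hv hx
  obtain ⟨b, q, hq, -, hb⟩ := hT.exists_isEndPath hv hy
  refine ⟨a, b, p, q, ?_, hp, hq⟩
  rintro rfl
  exact hxy (ha.trans hb.symm)

/-- If the component of `w` in `T - m` contains no end-branch, then it is a bare path. -/
theorem isOnLeg_of_forall_not_isEndBranch (hT : T.IsTree) (hw : w ≠ m)
    (h : ∀ e, IsEndBranch T e → ¬ JoinedAvoiding T m w e) : IsOnLeg T m w := by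
  classical
  refine ⟨hw, fun a ha => ?_⟩
  by_contra! ha3
  obtain ⟨z, hz, hmax⟩ := Finset.exists_max_image
    (Finset.univ.filter fun a => JoinedAvoiding T m w a ∧ 3 ≤ T.degree a) (fun a => T.dist a m)
    ⟨a, by simpa using ⟨ha, ha3⟩⟩
  simp only [Finset.mem_filter, Finset.mem_univ, true_and] at hz hmax
  obtain ⟨hwz, hz3⟩ := hz
  have hzm := hwz.ne_right
  obtain ⟨b, hb, -, hmb⟩ := hT.connected.exists_adj_joinedAvoiding hzm.symm
  have hleg (x : V) (hx : T.Adj z x) (hxb : x ≠ b) : IsOnLeg T z x := by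
    refine ⟨hx.ne', fun y hy => ?_⟩
    by_contra! hy3
    have hym : ¬ JoinedAvoiding T z y m := fun hh =>
      hxb (hT.eq_of_adj_of_joinedAvoiding hx hb ((hy.trans hh).trans hmb))
    have hd := hT.dist_add_dist hym
    have hyz := hT.connected.pos_dist_of_ne hy.ne_right
    have hzmp := hT.connected.pos_dist_of_ne hzm
    have := hmax y ⟨hwz.trans ?_, hy3⟩
    · omega
    · rw [hT.joinedAvoiding_iff, T.dist_comm (u := m), T.dist_comm (u := z) (v := y)]
      omega
  obtain ⟨x, y, hxy, hxb, hyb, hx, hy⟩ := exists_adj_ne_ne_of_three_le_degree hz3 b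
  exact h z (hT.isEndBranch_of_isOnLeg hz3 (hleg x hx hxb) (hleg y hy hyb)
    (hT.not_joinedAvoiding_of_adj hx hy hxy)) hwz

end SimpleGraph.IsTree

namespace IsEndBranch

variable {V : Type*} [Fintype V] {T : SimpleGraph V} [DecidableRel T.Adj] {v : V}

theorem three_le_degree (h : IsEndBranch T v) : 3 ≤ T.degree v := by
  obtain ⟨_, _, p, _, _, hp, _⟩ := h
  exact hp.2.2.1

theorem exists_adj_isOnLeg (h : IsEndBranch T v) (hT : T.IsTree) :
    ∃ x y, x ≠ y ∧ T.Adj v x ∧ T.Adj v y ∧ IsOnLeg T v x ∧ IsOnLeg T v y := by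
  obtain ⟨a, b, p, q, hab, hp, hq⟩ := h
  obtain ⟨x, hx, -, hax⟩ := hT.connected.exists_adj_joinedAvoiding hp.ne
  obtain ⟨y, hy, -, hby⟩ := hT.connected.exists_adj_joinedAvoiding hq.ne
  refine ⟨x, y, ?_, hx, hy, (hp.isOnLeg p.start_mem_support hp.ne).of_joinedAvoiding hax,
    (hq.isOnLeg q.start_mem_support hq.ne).of_joinedAvoiding hby⟩
  rintro rfl
  have hb := hp.mem_support_of_joinedAvoiding p.start_mem_support (hax.trans hby.symm)
  have := hp.2.2.2 b hb hab.symm hq.ne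
  have := hq.2.1
  omega

end IsEndBranch

theorem self_mem_endPalm {V : Type*} [Fintype V] {T : SimpleGraph V} [DecidableRel T.Adj] (v : V) :
    v ∈ endPalm T v :=
  Or.inl rfl

namespace SimpleGraph.IsTree

variable {V : Type*} [Fintype V] {T : SimpleGraph V} [DecidableRel T.Adj] {u v w i j z : V}

theorem not_joinedAvoiding_of_mem_endPalm (hT : T.IsTree) (hv : 3 ≤ T.degree v)
    (hw : w ∈ endPalm T v) (hu : u ∉ endPalm T v) : ¬ JoinedAvoiding T v u w := by
  intro h
  rw [hT.mem_endPalm_iff hv] at hw hu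
  rcases hw with rfl | hw
  · exact h.ne_right rfl
  · exact hu (Or.inr (hw.of_joinedAvoiding h.symm))

/-- A vertex outside a palm reaches the palm through its center. -/
theorem dist_eq_of_mem_endPalm (hT : T.IsTree) (hv : 3 ≤ T.degree v)
    (hw : w ∈ endPalm T v) (hu : u ∉ endPalm T v) : T.dist u v + T.dist v w = T.dist u w :=
  hT.dist_add_dist (hT.not_joinedAvoiding_of_mem_endPalm hv hw hu)

theorem eq_of_mem_endPalm_of_three_le_degree (hT : T.IsTree) (hi : 3 ≤ T.degree i)
    (hj : 3 ≤ T.degree j) (h : j ∈ endPalm T i) : j = i := by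
  rcases (hT.mem_endPalm_iff hi).1 h with h | h
  · exact h
  · have := h.2 j (.refl h.1)
    omega

theorem eq_of_isOnLeg (hT : T.IsTree) (hi : 3 ≤ T.degree i) (hj : 3 ≤ T.degree j)
    (hwi : IsOnLeg T i w) (hwj : IsOnLeg T j w) : i = j := by
  by_contra hij
  have h1 : ¬ JoinedAvoiding T i w j := fun h => by
    have := hwi.2 j h
    omega
  have h2 : ¬ JoinedAvoiding T j w i := fun h => by
    have := hwj.2 i h
    omega
  have h1 := hT.dist_add_dist h1
  have h2 := hT.dist_add_dist h2
  have := hT.connected.pos_dist_of_ne hij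
  rw [T.dist_comm (u := j) (v := i)] at h2
  omega

theorem eq_of_mem_endPalm (hT : T.IsTree) (hi : 3 ≤ T.degree i) (hj : 3 ≤ T.degree j)
    (hwi : w ∈ endPalm T i) (hwj : w ∈ endPalm T j) : i = j := by
  rcases (hT.mem_endPalm_iff hi).1 hwi with rfl | hwi'
  · exact hT.eq_of_mem_endPalm_of_three_le_degree hj hi hwj
  rcases (hT.mem_endPalm_iff hj).1 hwj with rfl | hwj'
  · exact (hT.eq_of_mem_endPalm_of_three_le_degree hi hj hwi).symm
  exact hT.eq_of_isOnLeg hi hj hwi' hwj'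

theorem mem_endPalm_of_dist_add_dist (hT : T.IsTree) (hv : 3 ≤ T.degree v)
    (hu : u ∈ endPalm T v) (hw : w ∈ endPalm T v) (h : T.dist u z + T.dist z w = T.dist u w) :
    z ∈ endPalm T v := by
  by_contra hz
  have h1 := hT.dist_eq_of_mem_endPalm hv hu hz
  have h2 := hT.dist_eq_of_mem_endPalm hv hw hz
  have h3 := hT.connected.dist_triangle (u := u) (v := v) (w := w)
  have hzv : z ≠ v := fun h => hz (by rw [h]; exact self_mem_endPalm v)
  have := hT.connected.pos_dist_of_ne hzv
  rw [T.dist_comm (u := u) (v := z)] at h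
  rw [T.dist_comm (u := u) (v := v)] at h3
  omega

/-- Distances within an end-palm agree with distances in the tree. -/
theorem dist_induce_endPalm (hT : T.IsTree) (hv : 3 ≤ T.degree v) (a b : endPalm T v) :
    (T.induce (endPalm T v)).dist a b = T.dist a b := by
  classical
  obtain ⟨p, hp⟩ := hT.connected.exists_walk_length_eq_dist a.1 b.1
  have hsub (z : V) (hz : z ∈ p.support) : z ∈ endPalm T v := by
    refine hT.mem_endPalm_of_dist_add_dist hv a.2 b.2 (le_antisymm ?_ hT.connected.dist_triangle)
    have h1 := congrArg Walk.length (p.take_spec hz)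
    rw [Walk.length_append] at h1
    have := dist_le (p.takeUntil z hz)
    have := dist_le (p.dropUntil z hz)
    omega
  have hlen : (p.induce _ hsub).length = p.length := by
    rw [← Walk.length_map (Embedding.induce _).toHom, Walk.map_induce]
    rfl
  have hle := dist_le (p.induce _ hsub)
  obtain ⟨q, hq⟩ := (p.induce _ hsub).reachable.exists_walk_length_eq_dist
  have hge := dist_le (q.map (Embedding.induce (endPalm T v)).toHom)
  rw [Walk.length_map] at hge
  apply le_antisymm
  · rw [← hp, ← hlen]
    exact hle
  · rw [← hq]
    exact hge

end SimpleGraph.IsTree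

section DistToSet

variable {V : Type*} {G : SimpleGraph V} {u v : V} {S S' : Set V}

theorem distToSet_le (hv : v ∈ S) : distToSet G u S ≤ G.dist u v :=
  Nat.sInf_le ⟨v, hv, rfl⟩

theorem exists_mem_distToSet_eq (hS : S.Nonempty) : ∃ v ∈ S, G.dist u v = distToSet G u S :=
  Nat.sInf_mem (hS.image (G.dist u))

@[simp]
theorem distToSet_empty : distToSet G u ∅ = 0 := by
  simp [distToSet]

theorem distToSet_eq_zero_of_mem (hu : u ∈ S) : distToSet G u S = 0 := by
  have := distToSet_le (G := G) (u := u) hu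
  rwa [dist_self, Nat.le_zero] at this

theorem distToSet_pos (hG : G.Connected) (hS : S.Nonempty) (hu : u ∉ S) :
    0 < distToSet G u S := by
  obtain ⟨v, hv, h⟩ := exists_mem_distToSet_eq (G := G) (u := u) hS
  rw [← h]
  exact hG.pos_dist_of_ne fun h => hu (h ▸ hv)

theorem distToSet_eq_of_subset (h : S ⊆ S')
    (h' : ∀ w ∈ S', ∃ w' ∈ S, G.dist u w' ≤ G.dist u w) :
    distToSet G u S' = distToSet G u S := by
  rcases S.eq_empty_or_nonempty with rfl | hS
  · rcases S'.eq_empty_or_nonempty with rfl | ⟨w, hw⟩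
    · rfl
    · obtain ⟨w', hw', -⟩ := h' w hw
      exact absurd hw' (Set.notMem_empty _)
  · apply le_antisymm
    · obtain ⟨v, hv, hd⟩ := exists_mem_distToSet_eq (G := G) (u := u) hS
      exact hd ▸ distToSet_le (h hv)
    · obtain ⟨w, hw, hd⟩ := exists_mem_distToSet_eq (G := G) (u := u) (hS.mono h)
      obtain ⟨w', hw', hle⟩ := h' w hw
      exact hd ▸ (distToSet_le hw').trans hle

theorem distToSet_eq_dist_add (hS : S.Nonempty)
    (h : ∀ w ∈ S, G.dist u v + G.dist v w = G.dist u w) :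
    distToSet G u S = G.dist u v + distToSet G v S := by
  apply le_antisymm
  · obtain ⟨w, hw, hd⟩ := exists_mem_distToSet_eq (G := G) (u := v) hS
    rw [← hd, h w hw]
    exact distToSet_le hw
  · obtain ⟨w, hw, hd⟩ := exists_mem_distToSet_eq (G := G) (u := u) hS
    rw [← hd, ← h w hw]
    exact Nat.add_le_add_left (distToSet_le hw) _

theorem distToSet_le_dist_add (hG : G.Connected) (hS : S.Nonempty) :
    distToSet G u S ≤ G.dist u v + distToSet G v S := by
  obtain ⟨w, hw, hd⟩ := exists_mem_distToSet_eq (G := G) (u := v) hS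
  rw [← hd]
  exact (distToSet_le hw).trans hG.dist_triangle

theorem distToSet_image {W : Type*} {H : SimpleGraph W} {e : W → V}
    (he : ∀ a b, H.dist a b = G.dist (e a) (e b)) (a : W) (S : Set W) :
    distToSet G (e a) (e '' S) = distToSet H a S := by
  simp only [distToSet, Set.image_image, he]

end DistToSet

/-- `f` restricts to a coloring of `P` that is proper and such that any two distinct vertices of
`P` are resolved by some color class in `P`, distances being measured in `G`. -/
def IsLocatingOn {V α : Type*} (G : SimpleGraph V) (P : Set V) (f : V → α) : Prop :=
  (∀ u ∈ P, ∀ v ∈ P, G.Adj u v → f u ≠ f v) ∧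
    ∀ u ∈ P, ∀ v ∈ P, u ≠ v →
      ∃ x, distToSet G u (P ∩ f ⁻¹' {x}) ≠ distToSet G v (P ∩ f ⁻¹' {x})

section Transfer

variable {V W α : Type*} {G : SimpleGraph V} {H : SimpleGraph W} {e : W → V} {f : V → α}

theorem IsLocatingOn.exists_isLocatingColoring [Finite V] (hf : IsLocatingOn G (Set.range e) f)
    (hinj : e.Injective) (hadj : ∀ a b, H.Adj a b → G.Adj (e a) (e b))
    (hdist : ∀ a b, H.dist a b = G.dist (e a) (e b)) :
    ∃ c : W → Fin (f '' Set.range e).ncard, IsLocatingColoring H c := by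
  have φ : (f '' Set.range e) ≃ Fin (f '' Set.range e).ncard :=
    Finite.equivFinOfCardEq (Nat.card_coe_set_eq _)
  refine ⟨fun w => φ ⟨f (e w), e w, ⟨w, rfl⟩, rfl⟩, fun a b hab h => ?_, fun a b hab => ?_⟩
  · exact hf.1 _ ⟨a, rfl⟩ _ ⟨b, rfl⟩ (hadj a b hab) (congrArg Subtype.val (φ.injective h))
  · obtain ⟨x, hx⟩ := hf.2 _ ⟨a, rfl⟩ _ ⟨b, rfl⟩ (hinj.ne hab)
    by_cases hxf : x ∈ f '' Set.range e
    · refine ⟨φ ⟨x, hxf⟩, ?_⟩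
      rw [← distToSet_image hdist, ← distToSet_image hdist]
      convert hx using 2 <;>
      · ext v
        simp only [Set.mem_image, Set.mem_preimage, Set.mem_singleton_iff, Set.mem_inter_iff,
          Set.mem_range, φ.injective.eq_iff]
        constructor
        · rintro ⟨w, hw, rfl⟩
          exact ⟨⟨w, rfl⟩, congrArg Subtype.val hw⟩
        · rintro ⟨⟨w, rfl⟩, hw⟩
          exact ⟨w, Subtype.ext hw, rfl⟩
    · refine absurd ?_ hx
      have hempty : Set.range e ∩ f ⁻¹' {x} = ∅ := by
        rw [Set.eq_empty_iff_forall_notMem]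
        rintro v ⟨hv, hvx⟩
        exact hxf ⟨v, hv, hvx⟩
      rw [hempty, distToSet_empty, distToSet_empty]

theorem IsLocatingColoring.exists_isLocatingOn {k : ℕ} {c : W → Fin k}
    (hc : IsLocatingColoring H c) (hinj : e.Injective)
    (hadj : ∀ a b, G.Adj (e a) (e b) → H.Adj a b)
    (hdist : ∀ a b, H.dist a b = G.dist (e a) (e b)) :
    ∃ g : V → ℕ, IsLocatingOn G (Set.range e) g ∧ ∀ v ∈ Set.range e, g v < k := by
  have happ (w : W) : Function.extend e (fun w => (c w : ℕ)) 0 (e w) = c w :=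
    hinj.extend_apply _ _ _
  refine ⟨Function.extend e (fun w => (c w : ℕ)) 0, ⟨?_, ?_⟩, ?_⟩
  · rintro _ ⟨a, rfl⟩ _ ⟨b, rfl⟩ hab h
    rw [happ, happ] at h
    exact hc.1 a b (hadj a b hab) (Fin.ext h)
  · rintro _ ⟨a, rfl⟩ _ ⟨b, rfl⟩ hab
    obtain ⟨i, hi⟩ := hc.2 a b (fun h => hab (congrArg e h))
    refine ⟨i, ?_⟩
    rw [← distToSet_image hdist, ← distToSet_image hdist] at hi
    convert hi using 2 <;>
    · ext v
      simp only [Set.mem_image, Set.mem_preimage, Set.mem_singleton_iff, Set.mem_inter_iff]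
      constructor
      · rintro ⟨⟨w, rfl⟩, hw⟩
        rw [happ] at hw
        exact ⟨w, Fin.ext hw, rfl⟩
      · rintro ⟨w, rfl, rfl⟩
        exact ⟨⟨w, rfl⟩, happ w⟩
  · rintro _ ⟨a, rfl⟩
    rw [happ]
    exact (c a).2

end Transfer

section LocatingChromaticNumber

variable {V α : Type*} [Finite V] {G : SimpleGraph V} {P : Set V} {f : V → α}

theorem IsLocatingOn.locatingChromaticNumber_le (hf : IsLocatingOn G Set.univ f) :
    locatingChromaticNumber G ≤ (Set.range f).ncard := by
  rw [← Set.range_id (α := V)] at hf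
  have := hf.exists_isLocatingColoring Function.injective_id (fun _ _ h => h) (fun _ _ => rfl)
  rw [Set.range_id, Set.image_univ] at this
  exact Nat.sInf_le this

theorem IsLocatingOn.locatingChromaticNumber_induce_le (hf : IsLocatingOn G P f)
    (hP : ∀ a b : P, (G.induce P).dist a b = G.dist a b) :
    locatingChromaticNumber (G.induce P) ≤ (f '' P).ncard := by
  rw [← Subtype.range_coe (s := P)] at hf
  have := hf.exists_isLocatingColoring Subtype.val_injective (H := G.induce P)
    (fun _ _ h => h) hP
  rw [Subtype.range_coe] at this
  exact Nat.sInf_le this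

/-- If `P` has a locating coloring, then it has an optimal one. -/
theorem IsLocatingOn.exists_lt_locatingChromaticNumber (hf : IsLocatingOn G P f)
    (hP : ∀ a b : P, (G.induce P).dist a b = G.dist a b) :
    ∃ g : V → ℕ, IsLocatingOn G P g ∧
      ∀ v ∈ P, g v < locatingChromaticNumber (G.induce P) := by
  rw [← Subtype.range_coe (s := P)] at hf
  have hne := hf.exists_isLocatingColoring Subtype.val_injective (H := G.induce P)
    (fun _ _ h => h) hP
  obtain ⟨c, hc⟩ := Nat.sInf_mem (⟨_, hne⟩ :
    {k : ℕ | ∃ c : P → Fin k, IsLocatingColoring (G.induce P) c}.Nonempty)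
  have := hc.exists_isLocatingOn (G := G) Subtype.val_injective (fun _ _ h => h) hP
  rwa [Subtype.range_coe] at this

end LocatingChromaticNumber

namespace IsEndBranch

variable {V : Type*} [Fintype V] {T : SimpleGraph V} [DecidableRel T.Adj] {v : V}

/-- A leg-by-leg coloring of an end-palm: odd depths get the color of their leg, even depths a
common color. -/
theorem exists_isLocatingOn_endPalm (h : IsEndBranch T v) (hT : T.IsTree) :
    ∃ f : V → Option V, IsLocatingOn T (endPalm T v) f ∧
      (f '' endPalm T v).ncard ≤ {u | T.degree u = 1 ∧ IsOnLeg T v u}.ncard + 1 := by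
  classical
  have hv := h.three_le_degree
  have hnx (w : V) : ∃ x, w ≠ v → T.Adj v x ∧ JoinedAvoiding T v w x := by
    by_cases hw : w = v
    · exact ⟨w, fun h => absurd hw h⟩
    · obtain ⟨x, hx, -, hj⟩ := hT.connected.exists_adj_joinedAvoiding hw
      exact ⟨x, fun _ => ⟨hx, hj⟩⟩
  choose nx hnx using hnx
  have hnx_eq {u w : V} (huw : JoinedAvoiding T v u w) : nx u = nx w :=
    hT.eq_of_adj_of_joinedAvoiding (hnx u huw.ne_left).1 (hnx w huw.ne_right).1
      (((hnx u huw.ne_left).2.symm.trans huw).trans (hnx w huw.ne_right).2)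
  have hnx_self {x : V} (hx : T.Adj v x) : nx x = x :=
    (hT.eq_of_adj_of_joinedAvoiding hx (hnx x hx.ne').1 (hnx x hx.ne').2).symm
  have hP {w : V} (hw : w ∈ endPalm T v) (hwv : w ≠ v) : IsOnLeg T v w :=
    ((hT.mem_endPalm_iff hv).1 hw).resolve_left hwv
  have hP' {w : V} (hw : IsOnLeg T v w) : w ∈ endPalm T v :=
    (hT.mem_endPalm_iff hv).2 (Or.inr hw)
  have hnxleg {w : V} (hw : w ∈ endPalm T v) (hwv : w ≠ v) : IsOnLeg T v (nx w) :=
    (hP hw hwv).of_joinedAvoiding (hnx w hwv).2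
  set f : V → Option V := fun w => if T.dist w v % 2 = 1 then some (nx w) else none with hf
  have hodd {w x : V} (hw : f w = some x) : T.dist w v % 2 = 1 ∧ nx w = x := by
    simpa [hf] using hw
  have hne {w : V} (hw : T.dist w v % 2 = 1) : w ≠ v := by
    rintro rfl
    simp at hw
  have hmem {x : V} (hx : T.Adj v x) (hl : IsOnLeg T v x) :
      x ∈ endPalm T v ∩ f ⁻¹' {some x} := by
    refine ⟨hP' hl, ?_⟩
    simp [hf, dist_eq_one_iff_adj.2 hx.symm, hnx_self hx]
  have hfar {u x : V} (hx : T.Adj v x) (hl : IsOnLeg T v x) (hu : u ≠ v → nx u ≠ x) :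
      distToSet T u (endPalm T v ∩ f ⁻¹' {some x}) = T.dist u v + 1 := by
    have h1 : distToSet T v (endPalm T v ∩ f ⁻¹' {some x}) = 1 := by
      apply le_antisymm
      · rw [← dist_eq_one_iff_adj.2 hx]
        exact distToSet_le (hmem hx hl)
      · refine distToSet_pos hT.connected ⟨x, hmem hx hl⟩ fun hvm => ?_
        exact hne (hodd hvm.2).1 rfl
    rw [← h1]
    refine distToSet_eq_dist_add ⟨x, hmem hx hl⟩ fun z hz => hT.dist_add_dist fun hj => ?_
    exact hu hj.ne_left ((hnx_eq hj).trans (hodd hz.2).2)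
  have hnear {u : V} (hu : u ∈ endPalm T v) (huv : u ≠ v) :
      distToSet T u (endPalm T v ∩ f ⁻¹' {some (nx u)}) ≤ 1 := by
    rcases Nat.mod_two_eq_zero_or_one (T.dist u v) with h0 | h1
    · obtain ⟨y, hy, hd⟩ := hT.connected.exists_adj_dist_add_one_eq huv.symm
      rw [T.dist_comm (u := v), T.dist_comm (u := v)] at hd
      have hy1 : T.dist y v % 2 = 1 := by omega
      have hj : JoinedAvoiding T v u y := .of_adj hy huv (hne hy1)
      rw [← dist_eq_one_iff_adj.2 hy]
      refine distToSet_le ⟨hP' ((hP hu huv).of_joinedAvoiding hj), ?_⟩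
      simp [hf, hy1, hnx_eq hj]
    · have hmemu : u ∈ endPalm T v ∩ f ⁻¹' {some (nx u)} := ⟨hu, by simp [hf, h1]⟩
      rw [distToSet_eq_zero_of_mem hmemu]
      omega
  obtain ⟨a, b, hab, ha, hb, hal, hbl⟩ := h.exists_adj_isOnLeg hT
  have hother (x : V) : ∃ y, T.Adj v y ∧ IsOnLeg T v y ∧ x ≠ y := by
    by_cases hxa : x = a
    · exact ⟨b, hb, hbl, hxa ▸ hab⟩
    · exact ⟨a, ha, hal, hxa⟩
  have hdiff {u w : V} (hu : u ∈ endPalm T v) (huv : u ≠ v) (hw : w ≠ v → nx w ≠ nx u)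
      (heq : ∀ x, distToSet T u (endPalm T v ∩ f ⁻¹' {x}) =
        distToSet T w (endPalm T v ∩ f ⁻¹' {x})) : False := by
    have h1 := hnear hu huv
    rw [heq, hfar (hnx u huv).1 (hnxleg hu huv) hw] at h1
    have h2 : w = v := hT.connected.dist_eq_zero_iff.1 (by omega)
    obtain ⟨y, hy, hyl, hne⟩ := hother (nx u)
    have h3 := heq (some y)
    rw [hfar hy hyl fun _ => hne, hfar hy hyl fun h => absurd h2 h, h2, SimpleGraph.dist_self] at h3
    have := hT.connected.pos_dist_of_ne huv
    omega
  refine ⟨f, ⟨fun u hu w hw huw hfe => ?_, fun u hu w hw huw => ?_⟩, ?_⟩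
  · have h1 := hT.dist_eq_dist_add_one_of_adj v huw
    rw [T.dist_comm (u := v), T.dist_comm (u := v)] at h1
    simp only [hf] at hfe
    split_ifs at hfe <;> omega
  · by_contra! heq
    by_cases huv : u = v
    · exact hdiff hw (fun h => huw (huv.trans h.symm)) (fun h => absurd huv h)
        fun x => (heq x).symm
    by_cases hnn : w ≠ v → nx w ≠ nx u
    · exact hdiff hu huv hnn heq
    push Not at hnn
    obtain ⟨hwv, hnn⟩ := hnn
    obtain ⟨y, hy, hyl, hne⟩ := hother (nx u)
    have h3 := heq (some y)
    rw [hfar hy hyl fun _ => hne, hfar hy hyl fun _ => hnn ▸ hne] at h3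
    refine huw (hT.eq_of_isOnLeg_of_dist_eq hv (hP hu huv) ?_ (by omega))
    have := (hnx w hwv).2.symm
    rw [hnn] at this
    exact (hnx u huv).2.trans this
  · have hsub : f '' endPalm T v ⊆ insert none (some '' {x | T.Adj v x ∧ IsOnLeg T v x}) := by
      rintro _ ⟨w, hw, rfl⟩
      by_cases hwo : T.dist w v % 2 = 1
      · right
        exact ⟨nx w, ⟨(hnx w (hne hwo)).1, hnxleg hw (hne hwo)⟩, by simp [hf, hwo]⟩
      · left
        simp [hf, hwo]
    refine (Set.ncard_le_ncard hsub (Set.toFinite _)).trans ((Set.ncard_insert_le _ _).trans ?_)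
    rw [Set.ncard_image_of_injective _ (Option.some_injective V), add_le_add_iff_right]
    have hleaf (x : V) : ∃ u, IsOnLeg T v x →
        T.degree u = 1 ∧ IsOnLeg T v u ∧ JoinedAvoiding T v x u := by
      by_cases hx : IsOnLeg T v x
      · obtain ⟨u, hu⟩ := hT.exists_leaf hv hx
        exact ⟨u, fun _ => hu⟩
      · exact ⟨x, fun h => absurd h hx⟩
    choose g hg using hleaf
    refine Set.ncard_le_ncard_of_injOn g (fun x hx => ⟨(hg x hx.2).1, (hg x hx.2).2.1⟩) ?_
      (Set.toFinite _)
    intro x hx y hy hxy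
    have h1 := (hg x hx.2).2.2
    rw [hxy] at h1
    exact hT.eq_of_adj_of_joinedAvoiding hx.1 hy.1 (h1.trans (hg y hy.2).2.2.symm)

end IsEndBranch

namespace SimpleGraph.IsTree

variable {V : Type*} [Fintype V] {T : SimpleGraph V} [DecidableRel T.Adj] {u v e : V}

/-- Outside the end-palms, the distances to the end-branches determine a vertex. -/
theorem exists_mem_endPalm_of_dist_eq (hT : T.IsTree) (he : IsEndBranch T e) (huv : u ≠ v)
    (h : ∀ i, IsEndBranch T i → T.dist u i = T.dist v i) :
    ∃ i, IsEndBranch T i ∧ u ∈ endPalm T i := by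
  classical
  obtain ⟨m, ⟨hmu, hmv⟩, hmax⟩ : ∃ m, (T.dist u m + T.dist m e = T.dist u e ∧
      T.dist v m + T.dist m e = T.dist v e) ∧ ∀ x, (T.dist u x + T.dist x e = T.dist u e ∧
      T.dist v x + T.dist x e = T.dist v e) → T.dist x e ≤ T.dist m e := by
    obtain ⟨m, hm, hmax⟩ := Finset.exists_max_image
      (Finset.univ.filter fun m => T.dist u m + T.dist m e = T.dist u e ∧
        T.dist v m + T.dist m e = T.dist v e) (fun m => T.dist m e) ⟨e, by simp⟩
    exact ⟨m, by simpa using hm, by simpa using hmax⟩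
  have hmm : T.dist u m = T.dist v m := by
    have := h e he
    omega
  have hum : u ≠ m := by
    rintro rfl
    rw [SimpleGraph.dist_self] at hmm
    exact huv (hT.connected.dist_eq_zero_iff.1 hmm.symm).symm
  have hvm : v ≠ m := by
    rintro rfl
    rw [SimpleGraph.dist_self] at hmm
    exact huv (hT.connected.dist_eq_zero_iff.1 hmm)
  obtain ⟨x, hx, hxd, hux⟩ := hT.connected.exists_adj_joinedAvoiding hum
  obtain ⟨y, hy, hyd, hvy⟩ := hT.connected.exists_adj_joinedAvoiding hvm
  have huv' : ¬ JoinedAvoiding T m u v := fun hj => by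
    obtain rfl := hT.eq_of_adj_of_joinedAvoiding hx hy ((hux.symm.trans hj).trans hvy)
    have h1 := hT.connected.dist_le_dist_add_one (u := e) hx
    rw [T.dist_comm (u := e), T.dist_comm (u := e)] at h1
    have h2 := hT.connected.dist_triangle (u := u) (v := x) (w := e)
    have := hmax x (by omega)
    omega
  have hue (i : V) (hi : IsEndBranch T i) : ¬ JoinedAvoiding T m u i := fun hj => by
    have h1 := hT.dist_add_dist fun hj' => huv' (hj.trans (JoinedAvoiding.symm hj'))
    rw [hT.joinedAvoiding_iff, h i hi] at hj
    omega
  have hve (i : V) (hi : IsEndBranch T i) : ¬ JoinedAvoiding T m v i := fun hj => by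
    have h1 := hT.dist_add_dist fun hj' => huv' (JoinedAvoiding.trans hj' hj.symm)
    rw [hT.joinedAvoiding_iff, ← h i hi] at hj
    omega
  have hu := hT.isOnLeg_of_forall_not_isEndBranch hum hue
  have hv := hT.isOnLeg_of_forall_not_isEndBranch hvm hve
  have hm : 3 ≤ T.degree m := by
    by_cases hem : e = m
    · exact hem ▸ he.three_le_degree
    obtain ⟨z, hz, -, hez⟩ := hT.connected.exists_adj_joinedAvoiding hem
    refine three_le_degree_of_adj hx hy hz ?_ ?_ ?_ <;> rintro rfl
    · exact huv' (hux.trans hvy.symm)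
    · exact hue e he (hux.trans hez.symm)
    · exact hve e he (hvy.trans hez.symm)
  exact ⟨m, hT.isEndBranch_of_isOnLeg hm hu hv huv', (hT.mem_endPalm_iff hm).2 (Or.inr hu)⟩

end SimpleGraph.IsTree

namespace IsEndBranch

variable {V : Type*} [Fintype V] {T : SimpleGraph V} [DecidableRel T.Adj] {v : V}

/-- A locating coloring of an end-palm uses a color besides those of the center and of one of its
neighbors. -/
theorem exists_color_ne {α : Type*} {g : V → α} (h : IsEndBranch T v) (hT : T.IsTree)
    (hg : IsLocatingOn T (endPalm T v) g) :
    ∃ x z, T.Adj v x ∧ x ∈ endPalm T v ∧ z ∈ endPalm T v ∧ g z ≠ g v ∧ g z ≠ g x := by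
  have hv := h.three_le_degree
  obtain ⟨x, y, hxy, hx, hy, hxl, hyl⟩ := h.exists_adj_isOnLeg hT
  have hvP := self_mem_endPalm (T := T) v
  have hxP := (hT.mem_endPalm_iff hv).2 (Or.inr hxl)
  have hyP := (hT.mem_endPalm_iff hv).2 (Or.inr hyl)
  by_contra! hcon
  have hall (z : V) (hz : z ∈ endPalm T v) (hzv : g z ≠ g v) : g z = g x :=
    hcon x z hx hxP hz hzv
  obtain ⟨c, hc⟩ := hg.2 x hxP y hyP hxy
  have hgx := hg.1 x hxP v hvP hx.symm
  have hgy := hg.1 y hyP v hvP hy.symm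
  apply hc
  have hone (w : V) (hw : T.Adj v w) (hwv : g w ≠ g v) :
      distToSet T w (endPalm T v ∩ g ⁻¹' {g v}) = 1 := by
    apply le_antisymm
    · rw [← dist_eq_one_iff_adj.2 hw.symm]
      exact distToSet_le ⟨hvP, rfl⟩
    · exact distToSet_pos hT.connected ⟨v, hvP, rfl⟩ fun hw' => hwv hw'.2
  by_cases hcv : c = g v
  · rw [hcv, hone x hx hgx, hone y hy hgy]
  by_cases hcx : c = g x
  · have hx0 : x ∈ endPalm T v ∩ g ⁻¹' {c} := ⟨hxP, hcx.symm⟩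
    have hy0 : y ∈ endPalm T v ∩ g ⁻¹' {c} := ⟨hyP, (hall y hyP hgy).trans hcx.symm⟩
    rw [distToSet_eq_zero_of_mem hx0, distToSet_eq_zero_of_mem hy0]
  · have hempty : endPalm T v ∩ g ⁻¹' {c} = ∅ := by
      rw [Set.eq_empty_iff_forall_notMem]
      rintro z ⟨hz, rfl⟩
      exact hcx (hall z hz hcv)
    rw [hempty, distToSet_empty, distToSet_empty]

end IsEndBranch

/-- Locating colorings of the end-palms glue to a locating coloring of the tree in which any two
palms share just two colors. -/
theorem SimpleGraph.IsTree.exists_isLocatingOn_univ {V : Type*} [Fintype V] {T : SimpleGraph V}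
    [DecidableRel T.Adj] (hT : T.IsTree) {e : V} (he : IsEndBranch T e) (S : Finset V)
    (hS : ∀ i, i ∈ S ↔ IsEndBranch T i) (g : V → V → ℕ) (k : V → ℕ)
    (hg : ∀ i ∈ S, IsLocatingOn T (endPalm T i) (g i))
    (hk : ∀ i ∈ S, ∀ w ∈ endPalm T i, g i w < k i) :
    ∃ f : V → Fin 2 ⊕ V × ℕ, IsLocatingOn T Set.univ f ∧
      ((Set.range f).ncard : ℤ) ≤ 2 + ∑ i ∈ S, ((k i : ℤ) - 2) := by
  classical
  obtain ⟨p⟩ : Nonempty (T.Coloring (Fin 2)) := hT.colorable_two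
  have hp {a b : V} (hab : T.Adj a b) : p a ≠ p b := p.valid hab
  have hdeg {i : V} (hi : i ∈ S) : 3 ≤ T.degree i := ((hS i).1 hi).three_le_degree
  have hxz (i : V) : ∃ x z, i ∈ S → T.Adj i x ∧ x ∈ endPalm T i ∧ z ∈ endPalm T i ∧
      g i z ≠ g i i ∧ g i z ≠ g i x := by
    by_cases hi : i ∈ S
    · obtain ⟨x, z, h⟩ := ((hS i).1 hi).exists_color_ne hT (hg i hi)
      exact ⟨x, z, fun _ => h⟩
    · exact ⟨i, i, fun h => absurd h hi⟩
  choose x z hxz using hxz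
  have hxi {i : V} (hi : i ∈ S) : g i (x i) ≠ g i i :=
    (hg i hi).1 _ (hxz i hi).2.1 _ (self_mem_endPalm i) (hxz i hi).1.symm
  set χ : V → ℕ → Fin 2 ⊕ V × ℕ := fun i c =>
    if c = g i i then .inl (p i) else if c = g i (x i) then .inl (p i + 1) else .inr (i, c) with hχ
  have hχinj (i : V) : (χ i).Injective := by
    intro c d hcd
    have hne : p i ≠ p i + 1 := by generalize p i = q; revert q; decide
    simp only [hχ] at hcd
    split_ifs at hcd <;> simp_all
  set f : V → Fin 2 ⊕ V × ℕ := fun w =>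
    if h : ∃ i ∈ S, w ∈ endPalm T i then χ h.choose (g h.choose w) else .inl (p w) with hf
  have hfin {i w : V} (hi : i ∈ S) (hw : w ∈ endPalm T i) : f w = χ i (g i w) := by
    have h : ∃ i ∈ S, w ∈ endPalm T i := ⟨i, hi, hw⟩
    have hc := h.choose_spec
    have heq := hT.eq_of_mem_endPalm (hdeg hc.1) (hdeg hi) hc.2 hw
    simp only [hf, dif_pos h, heq]
  have hfout {w : V} (hw : ∀ i ∈ S, w ∉ endPalm T i) : f w = .inl (p w) :=
    dif_neg fun ⟨i, hi, h⟩ => hw i hi h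
  have hfinr {w : V} {q : V × ℕ} (hw : f w = .inr q) :
      q.1 ∈ S ∧ w ∈ endPalm T q.1 ∧ g q.1 w = q.2 ∧ q.2 ≠ g q.1 q.1 ∧ q.2 ≠ g q.1 (x q.1) := by
    by_cases h : ∃ i ∈ S, w ∈ endPalm T i
    · obtain ⟨i, hi, hwi⟩ := h
      rw [hfin hi hwi] at hw
      simp only [hχ] at hw
      split_ifs at hw with h1 h2
      obtain rfl := Sum.inr_injective hw
      exact ⟨hi, hwi, rfl, h1, h2⟩
    · push Not at h
      rw [hfout h] at hw
      exact absurd hw (by simp)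
  have hclass {i u : V} (hi : i ∈ S) (hu : u ∈ endPalm T i) (c : ℕ) :
      distToSet T u (Set.univ ∩ f ⁻¹' {χ i c}) = distToSet T u (endPalm T i ∩ g i ⁻¹' {c}) := by
    apply distToSet_eq_of_subset
    · rintro w ⟨hw, rfl⟩
      exact ⟨trivial, hfin hi hw⟩
    · rintro w ⟨-, hw⟩
      change f w = χ i c at hw
      by_cases hwi : w ∈ endPalm T i
      · rw [hfin hi hwi] at hw
        exact ⟨w, ⟨hwi, hχinj i hw⟩, le_rfl⟩
      have hd := hT.dist_eq_of_mem_endPalm (hdeg hi) hu hwi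
      rw [T.dist_comm (u := w) (v := u), T.dist_comm (u := i)] at hd
      have hw0 := hT.connected.pos_dist_of_ne fun h : w = i =>
        hwi (by rw [h]; exact self_mem_endPalm i)
      by_cases h1 : c = g i i
      · exact ⟨i, ⟨self_mem_endPalm i, h1.symm⟩, by omega⟩
      by_cases h2 : c = g i (x i)
      · refine ⟨x i, ⟨(hxz i hi).2.1, h2.symm⟩, ?_⟩
        have := hT.connected.dist_le_dist_add_one (u := u) (hxz i hi).1
        omega
      · simp only [hχ, h1, h2, if_false] at hw
        exact absurd (hfinr hw).2.1 hwi
  set C : V → Set V := fun i => Set.univ ∩ f ⁻¹' {.inr (i, g i (z i))} with hC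
  have hCne {i : V} (hi : i ∈ S) : (C i).Nonempty := by
    obtain ⟨-, -, hz, h1, h2⟩ := hxz i hi
    refine ⟨z i, trivial, ?_⟩
    simp [hfin hi hz, hχ, h1, h2]
  have hCle {i : V} (hi : i ∈ S) (u : V) :
      distToSet T u (C i) ≤ T.dist u i + distToSet T i (C i) :=
    distToSet_le_dist_add hT.connected (hCne hi)
  have hCeq {i u : V} (hi : i ∈ S) (hu : u ∉ endPalm T i) :
      distToSet T u (C i) = T.dist u i + distToSet T i (C i) :=
    distToSet_eq_dist_add (hCne hi) fun w hw =>
      hT.dist_eq_of_mem_endPalm (hdeg hi) (hfinr hw.2).2.1 hu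
  have hnotmem {i j : V} (hi : i ∈ S) (hj : j ∈ S) (hij : j ≠ i) : j ∉ endPalm T i := fun h =>
    hij (hT.eq_of_mem_endPalm_of_three_le_degree (hdeg hi) (hdeg hj) h)
  have hsep {i u v : V} (hi : i ∈ S) (hu : u ∈ endPalm T i) (hv : v ∉ endPalm T i)
      (heq : ∀ c, distToSet T u (Set.univ ∩ f ⁻¹' {c}) = distToSet T v (Set.univ ∩ f ⁻¹' {c})) :
      False := by
    have hvi : v ≠ i := fun h => hv (by rw [h]; exact self_mem_endPalm i)
    refine hv ((hT.mem_endPalm_iff (hdeg hi)).2 (Or.inr ?_))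
    refine hT.isOnLeg_of_forall_not_isEndBranch hvi fun j hj hvj => ?_
    rw [← hS] at hj
    have hji := hvj.ne_right
    have huj : u ∉ endPalm T j := fun h =>
      hji (hT.eq_of_mem_endPalm (hdeg hj) (hdeg hi) h hu)
    have h1 : distToSet T u (C i) = distToSet T v (C i) := heq _
    have h2 : distToSet T u (C j) = distToSet T v (C j) := heq _
    rw [hCeq hi hv] at h1
    rw [hCeq hj huj] at h2
    have h3 := hCle hi u
    have h4 := hCle hj v
    have h5 := hT.dist_eq_of_mem_endPalm (hdeg hi) hu (hnotmem hi hj hji)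
    rw [T.dist_comm (u := j) (v := i), T.dist_comm (u := i) (v := u),
      T.dist_comm (u := j) (v := u)] at h5
    have h6 := hT.connected.dist_triangle (u := v) (v := i) (w := j)
    rw [hT.joinedAvoiding_iff] at hvj
    omega
  have hsame {a b : V} (hab : T.Adj a b) (hnot : ∀ i ∈ S, a ∈ endPalm T i → b ∉ endPalm T i) :
      f a = .inl (p a) := by
    by_cases h : ∃ i ∈ S, a ∈ endPalm T i
    · obtain ⟨i, hi, ha⟩ := h
      have hb := hnot i hi ha
      have hd := hT.dist_eq_of_mem_endPalm (hdeg hi) ha hb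
      rw [dist_eq_one_iff_adj.2 hab.symm] at hd
      have hb0 := hT.connected.pos_dist_of_ne fun h : b = i =>
        hb (by rw [h]; exact self_mem_endPalm i)
      obtain rfl : i = a := hT.connected.dist_eq_zero_iff.1 (by omega)
      simp [hfin hi ha, hχ]
    · push Not at h
      exact hfout h
  refine ⟨f, ⟨fun a _ b _ hab hfab => ?_, fun u _ v _ huv => ?_⟩, ?_⟩
  · by_cases h : ∃ i ∈ S, a ∈ endPalm T i ∧ b ∈ endPalm T i
    · obtain ⟨i, hi, ha, hb⟩ := h
      rw [hfin hi ha, hfin hi hb] at hfab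
      exact (hg i hi).1 a ha b hb hab (hχinj i hfab)
    · push Not at h
      rw [hsame hab h, hsame hab.symm fun i hi hb ha => h i hi ha hb] at hfab
      exact hp hab (Sum.inl_injective hfab)
  · by_contra! heq
    by_cases h : ∃ i ∈ S, u ∈ endPalm T i ∨ v ∈ endPalm T i
    · obtain ⟨i, hi, h⟩ := h
      by_cases hu : u ∈ endPalm T i
      · by_cases hv : v ∈ endPalm T i
        · obtain ⟨c, hc⟩ := (hg i hi).2 u hu v hv huv
          rw [← hclass hi hu, ← hclass hi hv] at hc
          exact hc (heq _)
        · exact hsep hi hu hv heq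
      · exact hsep hi (h.resolve_left hu) hu fun c => (heq c).symm
    · push Not at h
      obtain ⟨i, hi, hui⟩ := hT.exists_mem_endPalm_of_dist_eq he huv fun i hi => by
        rw [← hS] at hi
        have h1 : distToSet T u (C i) = distToSet T v (C i) := heq _
        rw [hCeq hi (h i hi).1, hCeq hi (h i hi).2] at h1
        omega
      exact (h i ((hS i).2 hi)).1 hui
  · set D : V → Finset ℕ := fun i => ((Finset.range (k i)).erase (g i i)).erase (g i (x i)) with hD
    have hsub : Set.range f ⊆ (((Finset.univ : Finset (Fin 2)).image .inl ∪
        S.biUnion fun i => (D i).image fun c => .inr (i, c) : Finset (Fin 2 ⊕ V × ℕ)) : Set _) := by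
      rintro _ ⟨w, rfl⟩
      rcases hw : f w with q | ⟨i, c⟩
      · simp
      · obtain ⟨hi, hwi, hc, h1, h2⟩ := hfinr hw
        have hlt := hk i hi w hwi
        dsimp only at hc h1 h2 hi
        rw [hc] at hlt
        simp [hD, hi, hlt, h1, h2]
    have hle := Set.ncard_le_ncard hsub (Finset.finite_toSet _)
    rw [Set.ncard_coe_finset] at hle
    have hDcard (i : V) (hi : i ∈ S) :
        (((D i).image fun c => (.inr (i, c) : Fin 2 ⊕ V × ℕ)).card : ℤ) ≤ (k i : ℤ) - 2 := by
      have h1 : g i i ∈ Finset.range (k i) := Finset.mem_range.2 (hk i hi i (self_mem_endPalm i))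
      have h2 : g i (x i) ∈ (Finset.range (k i)).erase (g i i) :=
        Finset.mem_erase.2 ⟨hxi hi, Finset.mem_range.2 (hk i hi _ (hxz i hi).2.1)⟩
      have h3 := Finset.card_erase_add_one h1
      have h4 := Finset.card_erase_add_one h2
      have h5 := Finset.card_image_le (s := D i) (f := fun c => (.inr (i, c) : Fin 2 ⊕ V × ℕ))
      rw [Finset.card_range] at h3
      simp only [hD] at h5 ⊢
      omega
    have h1 := Finset.card_union_le ((Finset.univ : Finset (Fin 2)).image .inl)
      (S.biUnion fun i => (D i).image fun c => (.inr (i, c) : Fin 2 ⊕ V × ℕ))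
    have h2 := Finset.card_image_le (s := (Finset.univ : Finset (Fin 2)))
      (f := (.inl : Fin 2 → Fin 2 ⊕ V × ℕ))
    have h3 := Finset.card_biUnion_le (s := S)
      (t := fun i => (D i).image fun c => (.inr (i, c) : Fin 2 ⊕ V × ℕ))
    have h4 := Finset.sum_le_sum hDcard
    rw [Finset.card_univ, Fintype.card_fin] at h2
    rw [← Nat.cast_sum] at h4
    omega

/-- The branches with an end-path, each counted with its number of legs, use up at most all the
leaves; the branches that are not end-branches use up at least one leaf each. -/
theorem SimpleGraph.IsTree.sum_ncard_leaf_isOnLeg_add_le {V : Type*} [Fintype V]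
    {T : SimpleGraph V} [DecidableRel T.Adj] (hT : T.IsTree) {S B : Finset V} (hSB : S ⊆ B)
    (hB : ∀ v ∈ B, 3 ≤ T.degree v ∧ ∃ (u : V) (p : T.Walk u v), IsEndPath T p) :
    ∑ v ∈ S, {u | T.degree u = 1 ∧ IsOnLeg T v u}.ncard + B.card ≤
      {v | T.degree v = 1}.ncard + S.card := by
  classical
  let L : V → Finset V := fun v => {u | T.degree u = 1 ∧ IsOnLeg T v u}
  have hL : ∀ v, {u | T.degree u = 1 ∧ IsOnLeg T v u}.ncard = (L v).card := fun v => by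
    rw [← Set.ncard_coe_finset]; simp [L]
  have hdisj : ∀ i ∈ B, ∀ j ∈ B, i ≠ j → Disjoint (L i) (L j) := fun i hi j hj hij => by
    refine Finset.disjoint_left.2 fun w hwi hwj => hij ?_
    simp only [L, Finset.mem_filter_univ] at hwi hwj
    exact hT.eq_of_isOnLeg (hB i hi).1 (hB j hj).1 hwi.2 hwj.2
  have hle : ∑ v ∈ B, (L v).card ≤ {v | T.degree v = 1}.ncard := by
    rw [← Finset.card_biUnion hdisj, ← Set.ncard_coe_finset]
    refine Set.ncard_le_ncard (fun u hu => ?_)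
    simp only [Finset.coe_biUnion, Set.mem_iUnion, L, Finset.mem_coe, Finset.mem_filter_univ] at hu
    obtain ⟨_, _, hu⟩ := hu
    exact hu.1
  have hone : (B \ S).card ≤ ∑ v ∈ B \ S, (L v).card := by
    rw [Finset.card_eq_sum_ones]
    refine Finset.sum_le_sum fun v hv => ?_
    obtain ⟨-, u, p, hp⟩ := hB v (Finset.mem_sdiff.1 hv).1
    refine Finset.card_pos.2 ⟨u, ?_⟩
    simp only [L, Finset.mem_filter_univ]
    exact ⟨hp.2.1, hp.isOnLeg p.start_mem_support hp.ne⟩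
  have hsum := Finset.sum_sdiff (f := fun v => (L v).card) hSB
  have hcard := Finset.card_sdiff_add_card_eq_card hSB
  simp only [hL]
  omega

/-- Let `T` be a tree having `l` leaves, `β` branches with at least one
end-path, and `b ≥ 1` branches with at least two end-paths (end-branches), with end-palms
`P_1, …, P_b`. Then `χ_L(T) ≤ 2 - 2b + ∑ χ_L(P_i) ≤ l - β + 2 ≤ l - b + 2`. -/
theorem locatingChromaticNumber_tree_le_chain {V : Type*} [Fintype V]
    (T : SimpleGraph V) [DecidableRel T.Adj] (hT : T.IsTree)
    (l β b : ℕ)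
    (hl : l = {v | T.degree v = 1}.ncard)
    (hβ : β = {v | 3 ≤ T.degree v ∧ ∃ (u : V) (p : T.Walk u v), IsEndPath T p}.ncard)
    (hbdef : b = {v | IsEndBranch T v}.ncard)
    (hb : 1 ≤ b) :
    (locatingChromaticNumber T : ℤ) ≤
        2 - 2 * (b : ℤ) +
          ∑ᶠ v ∈ {v | IsEndBranch T v},
            (locatingChromaticNumber (T.induce (endPalm T v)) : ℤ) ∧
      2 - 2 * (b : ℤ) +
          ∑ᶠ v ∈ {v | IsEndBranch T v},
            (locatingChromaticNumber (T.induce (endPalm T v)) : ℤ) ≤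
        (l : ℤ) - (β : ℤ) + 2 ∧
      (l : ℤ) - (β : ℤ) + 2 ≤ (l : ℤ) - (b : ℤ) + 2 := by
  classical
  let S : Finset V := {v | IsEndBranch T v}
  let B : Finset V := {v | 3 ≤ T.degree v ∧ ∃ (u : V) (p : T.Walk u v), IsEndPath T p}
  have hS : ∀ i, i ∈ S ↔ IsEndBranch T i := fun i => by simp [S]
  have hB : ∀ i, i ∈ B ↔ 3 ≤ T.degree i ∧ ∃ (u : V) (p : T.Walk u i), IsEndPath T p :=
    fun i => by simp [B]
  have hSB : S ⊆ B := fun i hi => by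
    have h := (hS i).1 hi
    obtain ⟨u, _, p, _, _, hp, _⟩ := id h
    exact (hB i).2 ⟨h.three_le_degree, u, p, hp⟩
  have hbS : b = S.card := by rw [hbdef, ← Set.ncard_coe_finset]; simp [S]
  have hβB : β = B.card := by rw [hβ, ← Set.ncard_coe_finset]; simp [B]
  have hset : {v | IsEndBranch T v} = (S : Set V) := by simp [S]
  rw [hset, finsum_mem_coe_finset]
  choose! f hf hfcard using fun i (hi : i ∈ S) => ((hS i).1 hi).exists_isLocatingOn_endPalm hT
  have hdist : ∀ i ∈ S, ∀ x y : endPalm T i,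
      (T.induce (endPalm T i)).dist x y = T.dist x y :=
    fun i hi => hT.dist_induce_endPalm ((hS i).1 hi).three_le_degree
  have hle := hT.sum_ncard_leaf_isOnLeg_add_le hSB fun v hv => (hB v).1 hv
  rw [← hl, ← hβB, ← hbS] at hle
  have hpalm : ∑ i ∈ S, locatingChromaticNumber (T.induce (endPalm T i)) ≤
      ∑ i ∈ S, {u | T.degree u = 1 ∧ IsOnLeg T i u}.ncard + b := by
    rw [hbS, Finset.card_eq_sum_ones, ← Finset.sum_add_distrib]
    exact Finset.sum_le_sum fun i hi =>
      ((hf i hi).locatingChromaticNumber_induce_le (hdist i hi)).trans (hfcard i hi)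
  have hbβ := Finset.card_le_card hSB
  refine ⟨?_, ?_, by omega⟩
  · obtain ⟨e, he⟩ := Finset.card_pos.1 (hbS ▸ hb : 0 < S.card)
    choose! g hg hgk using fun i (hi : i ∈ S) =>
      (hf i hi).exists_lt_locatingChromaticNumber (hdist i hi)
    obtain ⟨c, hc, hcard⟩ := hT.exists_isLocatingOn_univ ((hS e).1 he) S hS g _ hg hgk
    have hT' := hc.locatingChromaticNumber_le
    rw [Finset.sum_sub_distrib, Finset.sum_const, ← hbS, nsmul_eq_mul] at hcard
    omega
  · push_cast [← Nat.cast_sum]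
    omega
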